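/- Fix constants γ, δ > 0. With high probability there do not exist a color i ∈ [q] and sets S ⊆ A, T ⊆ B with |S| = |T| = ⌈γ·n/log n⌉ such that e_i(S,T) ≥ δ·|S|·log n/log log n. -/

import Mathlib

open MeasureTheory Filter Finset Asymptotics

/-- Discrete measurable structure on edge states: `none` = non-edge, `some i` = edge of color `cᵢ`. -/
instance (q : ℕ) : MeasurableSpace (Option (Fin q)) := ⊤

/-- Distribution of the state of a single pair: non-edge with probability `1-p`,
an edge of color `cᵢ` with probability `αᵢ·p`. -/
noncomputable def colorM (q : ℕ) (α : Fin q → ℝ) (p : ℝ) : Measure (Option (Fin q)) :=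
  ENNReal.ofReal (1 - p) • Measure.dirac none +
    ∑ i : Fin q, ENNReal.ofReal (α i * p) • Measure.dirac (some i)

/-- The randomly colored random bipartite graph on parts `A = B = Fin n`:
independently, each pair `(a,b)` is a non-edge with probability `1-p` and an
edge of color `cᵢ` with probability `αᵢ·p`.  A sample is a function
`f : Fin n × Fin n → Option (Fin q)`. -/
noncomputable def graphM (n q : ℕ) (α : Fin q → ℝ) (p : ℝ) :
    Measure (Fin n × Fin n → Option (Fin q)) :=
  Measure.pi fun _ => colorM q α p

instance colorM_finite (q : ℕ) (α : Fin q → ℝ) (p : ℝ) : IsFiniteMeasure (colorM q α p) := by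
  unfold colorM
  refine ⟨?_⟩
  simp

lemma colorM_prob (q : ℕ) (α : Fin q → ℝ) (hα : ∀ i, 0 < α i) (hsum : ∑ i, α i = 1)
    (p : ℝ) (h0 : 0 ≤ p) (h1 : p ≤ 1) : IsProbabilityMeasure (colorM q α p) := by
  refine ⟨?_⟩
  unfold colorM
  simp only [Measure.add_apply, Measure.smul_apply, Measure.finsetSum_apply, smul_eq_mul,
    measure_univ, mul_one]
  rw [← ENNReal.ofReal_sum_of_nonneg (fun i _ => mul_nonneg (hα i).le h0),
    ← ENNReal.ofReal_add (by linarith) (Finset.sum_nonneg fun i _ => mul_nonneg (hα i).le h0),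
    ← Finset.sum_mul, hsum]
  simp

lemma colorM_real (q : ℕ) (α : Fin q → ℝ) (hα : ∀ i, 0 < α i)
    (p : ℝ) (h0 : 0 ≤ p) (i : Fin q) : (colorM q α p).real {some i} = α i * p := by
  unfold colorM Measure.real
  simp only [Measure.add_apply, Measure.smul_apply, Measure.finsetSum_apply, smul_eq_mul]
  rw [Finset.sum_eq_single i]
  · simp [ENNReal.toReal_ofReal (mul_nonneg (hα i).le h0)]
  · intro b _ hb
    simp [hb]
  · simp

lemma colorM_integral (q : ℕ) (α : Fin q → ℝ) (hα : ∀ i, 0 < α i) (hsum : ∑ i, α i = 1)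
    (p : ℝ) (h0 : 0 ≤ p) (h1 : p ≤ 1) (i : Fin q) (t : ℝ) (ht : 1 ≤ t) :
    ∫ c, (if c = some i then t else 1) ∂(colorM q α p) ≤ Real.exp (t * p) := by
  have := colorM_prob q α hα hsum p h0 h1
  have h : (fun c : Option (Fin q) => if c = some i then t else 1)
      = fun c => ({some i} : Set (Option (Fin q))).indicator (fun _ => t - 1) c + 1 := by
    funext c
    by_cases hc : c = some i <;> simp [hc]
  have hαi : α i ≤ 1 := hsum ▸ Finset.single_le_sum (fun j _ => (hα j).le) (Finset.mem_univ i)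
  rw [h, integral_add Integrable.of_finite Integrable.of_finite,
    integral_indicator_const _ (MeasurableSet.of_discrete), colorM_real q α hα p h0]
  simp only [integral_const, smul_eq_mul, probReal_univ, mul_one]
  have h2 : α i * p * (t - 1) ≤ t * p := by
    have : α i * p ≤ p := by nlinarith
    nlinarith [mul_nonneg (hα i).le h0]
  linarith [Real.add_one_le_exp (t * p)]

lemma graphM_chernoff (n q : ℕ) (α : Fin q → ℝ) (hα : ∀ i, 0 < α i) (hsum : ∑ i, α i = 1)
    (p : ℝ) (h0 : 0 ≤ p) (h1 : p ≤ 1) (i : Fin q) (t : ℝ) (ht : 1 ≤ t) (x : ℝ)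
    (U : Finset (Fin n × Fin n)) :
    (graphM n q α p).real {f | x ≤ ((U.filter fun e => f e = some i).card : ℝ)}
      ≤ Real.exp (U.card * (t * p) - x * Real.log t) := by
  have := colorM_prob q α hα hsum p h0 h1
  have hpr : IsProbabilityMeasure (graphM n q α p) := by unfold graphM; infer_instance
  set g : Fin n × Fin n → Option (Fin q) → ℝ :=
    fun e c => if e ∈ U then (if c = some i then t else 1) else 1 with hg
  have hF : ∀ f : Fin n × Fin n → Option (Fin q),
      ∏ e, g e (f e) = t ^ (U.filter fun e => f e = some i).card := by
    intro f
    simp only [hg]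
    rw [Finset.prod_ite_mem, Finset.univ_inter, Finset.prod_ite]
    simp
  have hbound : ∫ f, ∏ e, g e (f e) ∂(graphM n q α p) ≤ Real.exp (U.card * (t * p)) := by
    unfold graphM
    rw [integral_fintype_prod_eq_prod]
    have : ∀ e ∈ (Finset.univ : Finset (Fin n × Fin n)), ∫ c, g e c ∂(colorM q α p)
        ≤ if e ∈ U then Real.exp (t * p) else 1 := by
      intro e _
      by_cases he : e ∈ U
      · simp only [hg, he, if_true]
        exact colorM_integral q α hα hsum p h0 h1 i t ht
      · simp [hg, he]
    refine (Finset.prod_le_prod ?_ this).trans ?_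
    · intro e _
      refine integral_nonneg fun c => ?_
      simp only [hg, Pi.zero_apply]
      split_ifs <;> linarith
    · rw [Finset.prod_ite_mem, Finset.univ_inter, Finset.prod_const, ← Real.exp_nat_mul]
  have hm := mul_meas_ge_le_integral_of_nonneg (μ := graphM n q α p)
    (f := fun f => ∏ e, g e (f e)) (ae_of_all _ fun f => by
      simp only [hF, Pi.zero_apply]; positivity) Integrable.of_finite (Real.exp (x * Real.log t))
  have hsub : (graphM n q α p).real {f | x ≤ ((U.filter fun e => f e = some i).card : ℝ)}
      ≤ (graphM n q α p).real {f | Real.exp (x * Real.log t) ≤ ∏ e, g e (f e)} := by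
    refine measureReal_mono ?_
    intro f hf
    simp only [Set.mem_ofPred_eq] at hf ⊢
    rw [hF, ← Real.exp_log (by linarith : 0 < t), ← Real.exp_nat_mul, Real.log_exp]
    exact Real.exp_le_exp.2 (mul_le_mul_of_nonneg_right hf (Real.log_nonneg ht))
  rw [Real.exp_sub, le_div_iff₀ (Real.exp_pos _), mul_comm]
  exact ((mul_le_mul_of_nonneg_left hsub (Real.exp_pos _).le).trans hm).trans hbound

lemma graphM_union (n q : ℕ) (α : Fin q → ℝ) (hα : ∀ i, 0 < α i) (hsum : ∑ i, α i = 1)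
    (p : ℝ) (h0 : 0 ≤ p) (h1 : p ≤ 1) (t : ℝ) (ht : 1 ≤ t) (x : ℕ → ℝ) (s : ℕ) :
    (graphM n q α p).real {f | ∃ (i : Fin q) (S T : Finset (Fin n)),
          S.card = s ∧ T.card = s ∧
          x S.card ≤ (((S ×ˢ T).filter fun e => f e = some i).card : ℝ)}
      ≤ q * ((n.choose s : ℝ) * n.choose s)
          * Real.exp ((s * s : ℝ) * (t * p) - x s * Real.log t) := by
  have := colorM_prob q α hα hsum p h0 h1
  have hpr : IsProbabilityMeasure (graphM n q α p) := by unfold graphM; infer_instance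
  set I : Finset (Fin q × Finset (Fin n) × Finset (Fin n)) :=
    Finset.univ ×ˢ (Finset.powersetCard s Finset.univ ×ˢ Finset.powersetCard s Finset.univ) with hI
  have hsub : {f : Fin n × Fin n → Option (Fin q) | ∃ (i : Fin q) (S T : Finset (Fin n)),
          S.card = s ∧ T.card = s ∧
          x S.card ≤ (((S ×ˢ T).filter fun e => f e = some i).card : ℝ)}
      ⊆ ⋃ k ∈ I, {f | x s ≤ (((k.2.1 ×ˢ k.2.2).filter fun e => f e = some k.1).card : ℝ)} := by
    rintro f ⟨i, S, T, hS, hT, h⟩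
    simp only [Set.mem_iUnion]
    refine ⟨(i, S, T), ?_, ?_⟩
    · simp [hI, hS, hT]
    · rw [hS] at h
      exact h
  refine (measureReal_mono hsub (measure_ne_top _ _)).trans ((measureReal_biUnion_finset_le _ _).trans ?_)
  refine (Finset.sum_le_card_nsmul I _
    (Real.exp ((s * s : ℝ) * (t * p) - x s * Real.log t)) ?_).trans ?_
  · rintro ⟨i, S, T⟩ hk
    simp only [hI, Finset.mem_product, Finset.mem_powersetCard] at hk
    have := graphM_chernoff n q α hα hsum p h0 h1 i t ht (x s) (S ×ˢ T)
    rw [Finset.card_product, hk.2.1.2, hk.2.2.2] at this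
    push_cast at this
    exact this
  · rw [nsmul_eq_mul]
    simp [hI]

lemma choose_le_exp (n s : ℕ) (hs : 0 < s) (K : ℝ) (hK : (n : ℝ) ≤ K * s) (hK0 : 0 < K) :
    (n.choose s : ℝ) ≤ Real.exp (s * (1 + Real.log K)) := by
  have h1 : (n.choose s : ℝ) ≤ (n : ℝ) ^ s / (s.factorial : ℝ) := Nat.choose_le_pow_div s n
  have h2 := Real.pow_div_factorial_le_exp (x := (s : ℝ)) (by positivity) s
  have h3 : (n : ℝ) ^ s ≤ (K * s) ^ s := by gcongr
  calc (n.choose s : ℝ) ≤ (n : ℝ) ^ s / (s.factorial : ℝ) := h1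
    _ ≤ (K * s) ^ s / (s.factorial : ℝ) := by gcongr
    _ = K ^ s * ((s : ℝ) ^ s / (s.factorial : ℝ)) := by rw [mul_pow]; ring
    _ ≤ K ^ s * Real.exp s := by gcongr
    _ = Real.exp (s * (1 + Real.log K)) := by
      rw [mul_add, Real.exp_add, Real.exp_nat_mul (Real.log K), Real.exp_log hK0]
      ring_nf

/-- The exponent tends to `-∞`. -/
lemma exponent_tendsto (γ δ : ℝ) (hγ : 0 < γ) (hδ : 0 < δ) :
    Tendsto (fun L : ℝ => 2 * (1 + Real.log (L / γ)) + 4 * γ * √L - δ * L / 2) atTop atBot := by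
  have hlog : (fun L : ℝ => Real.log (L / γ)) =o[atTop] (fun L : ℝ => L) := by
    have h1 : Tendsto (fun L : ℝ => L / γ) atTop atTop := tendsto_id.atTop_div_const hγ
    have h2 := Real.isLittleO_log_id_atTop.comp_tendsto h1
    refine h2.trans_isBigO ?_
    simp only [Function.comp_def, id, div_eq_inv_mul]
    exact isBigO_const_mul_self _ _ _
  have hA : ∀ᶠ L : ℝ in atTop, Real.log (L / γ) ≤ (δ / 16) * L := by
    filter_upwards [hlog.bound (show 0 < δ / 16 by positivity), eventually_ge_atTop 0] with L h h0
    rw [Real.norm_of_nonneg h0] at h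
    exact (le_abs_self _).trans h
  have hB : ∀ᶠ L : ℝ in atTop, √L ≤ (δ / (32 * γ)) * L := by
    have hc : 0 < δ / (32 * γ) := by positivity
    filter_upwards [eventually_ge_atTop ((1 / (δ / (32 * γ))) ^ 2), eventually_ge_atTop 0]
      with L h h0
    have h1 : 1 / (δ / (32 * γ)) ≤ √L := Real.le_sqrt_of_sq_le h
    rw [div_le_iff₀ hc] at h1
    nlinarith [Real.mul_self_sqrt h0, Real.sqrt_nonneg L]
  have hC : Tendsto (fun L : ℝ => 2 + (-(δ / 4)) * L) atTop atBot :=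
    tendsto_atBot_add_const_left _ _ (tendsto_id.const_mul_atTop_of_neg (by linarith))
  refine tendsto_atBot_mono' _ ?_ hC
  filter_upwards [hA, hB] with L h1 h2
  have h3 : 4 * γ * √L ≤ δ / 8 * L := by
    calc 4 * γ * √L ≤ 4 * γ * ((δ / (32 * γ)) * L) := by gcongr
      _ = δ / 8 * L := by field_simp; ring
  linarith

/-- Lemma 2(e): for constants `γ, δ > 0`, w.h.p. there are no color `i` and sets
`S ⊆ A`, `T ⊆ B` with `|S| = |T| = ⌈γ n/log n⌉` carrying at least `δ |S| log n/log log n`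
edges of color `cᵢ`. -/
theorem lemma_e (q : ℕ) (hq : 1 ≤ q) (α : Fin q → ℝ)
    (hα : ∀ i, 0 < α i) (hsum : ∑ i, α i = 1)
    (γ δ : ℝ) (hγ : 0 < γ) (hδ : 0 < δ)
    (w : ℕ → ℝ) (hw : Tendsto w atTop atTop)
    (hwo : w =o[atTop] fun n => Real.log n) :
    Tendsto (fun n =>
      graphM n q α ((Real.log n + w n) / n)
        {f | ¬ ∃ (i : Fin q) (S T : Finset (Fin n)),
          S.card = ⌈γ * n / Real.log n⌉₊ ∧ T.card = ⌈γ * n / Real.log n⌉₊ ∧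
          δ * S.card * Real.log n / Real.log (Real.log n) ≤
            (((S ×ˢ T).filter fun e => f e = some i).card : ℝ)})
      atTop (nhds 1) := by
  have hL : Tendsto (fun n : ℕ => Real.log (n : ℝ)) atTop atTop :=
    Real.tendsto_log_atTop.comp tendsto_natCast_atTop_atTop
  have hnL : Tendsto (fun n : ℕ => Real.log (n : ℝ) / n) atTop (nhds 0) := by
    have h := Real.isLittleO_log_id_atTop.tendsto_div_nhds_zero.comp
      (tendsto_natCast_atTop_atTop (R := ℝ))
    simpa [Function.comp_def] using h
  have hexp := (exponent_tendsto γ δ hγ hδ).comp hL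
  set E : ℕ → ℝ := fun n => 2 * (1 + Real.log (Real.log n / γ)) + 4 * γ * √(Real.log n)
    - δ * Real.log n / 2 with hE
  have hlim : Tendsto (fun n => (q : ℝ) * Real.exp (E n)) atTop (nhds 0) := by
    have := (Real.tendsto_exp_atBot.comp hexp).const_mul (q : ℝ)
    simpa [Function.comp_def, hE] using this
  set B : (n : ℕ) → Set (Fin n × Fin n → Option (Fin q)) := fun n =>
    {f | ∃ (i : Fin q) (S T : Finset (Fin n)),
          S.card = ⌈γ * n / Real.log n⌉₊ ∧ T.card = ⌈γ * n / Real.log n⌉₊ ∧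
          δ * S.card * Real.log n / Real.log (Real.log n) ≤
            (((S ×ˢ T).filter fun e => f e = some i).card : ℝ)} with hB
  set P : ℕ → ℝ := fun n => (Real.log n + w n) / n with hP
  have hw1 : ∀ᶠ n in atTop, w n ≤ Real.log n := by
    filter_upwards [hwo.bound one_pos, hL.eventually_ge_atTop 0] with n h h0
    rw [Real.norm_of_nonneg h0, one_mul] at h
    exact (le_abs_self _).trans h
  have key : ∀ᶠ n in atTop, (0 ≤ P n ∧ P n ≤ 1) ∧
      (graphM n q α (P n)).real (B n) ≤ q * Real.exp (E n) := by
    filter_upwards [hw1, hw.eventually_ge_atTop 0, hL.eventually_gt_atTop 1,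
      hnL.eventually_lt_const (show (0:ℝ) < 1/2 by norm_num),
      hnL.eventually_lt_const hγ, hexp.eventually_le_atBot 0, eventually_gt_atTop 0]
      with n h1 h2 h3 h4 h5 h6 h7
    have hn : (0:ℝ) < n := by exact_mod_cast h7
    set L := Real.log (n : ℝ) with hLdef
    have hL0 : 0 < L := by linarith
    have hp2 : P n ≤ 2 * L / n := by
      simp only [hP]; gcongr; linarith
    have hp0 : 0 ≤ P n := by simp only [hP]; positivity
    have hp1 : P n ≤ 1 := by
      refine hp2.trans ?_
      rw [mul_div_assoc]; linarith
    refine ⟨⟨hp0, hp1⟩, ?_⟩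
    set s := ⌈γ * n / L⌉₊ with hs
    have hy : 1 ≤ γ * n / L := by
      rw [le_div_iff₀ hL0, one_mul]
      rw [div_lt_iff₀ hn] at h5
      exact h5.le
    have hsl : γ * n / L ≤ s := Nat.le_ceil _
    have hsu : (s : ℝ) ≤ 2 * (γ * n / L) := by
      have := Nat.ceil_lt_add_one (show 0 ≤ γ * n / L by linarith)
      linarith
    have hs1 : (1 : ℝ) ≤ s := hy.trans hsl
    have hs0 : 0 < s := by exact_mod_cast (by linarith : (0:ℝ) < s)
    have hll : 0 < Real.log L := Real.log_pos h3
    have hu := graphM_union n q α hα hsum (P n) hp0 hp1 (√L)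
      (Real.one_le_sqrt.2 h3.le) (fun k => δ * k * L / Real.log L) s
    have hc := choose_le_exp n s hs0 (L / γ) (by
      rw [div_le_iff₀ hL0] at hsl
      rw [div_mul_eq_mul_div, le_div_iff₀ hγ]
      linarith) (by positivity)
    refine hu.trans ?_
    have hx : δ * s * L / Real.log L * Real.log √L = s * (δ * L / 2) := by
      rw [Real.log_sqrt hL0.le]
      field_simp
    have hsp : s * P n ≤ 4 * γ := by
      calc s * P n ≤ (2 * (γ * n / L)) * (2 * L / n) := by gcongr
        _ = 4 * γ := by field_simp; ring
    have hee : (s * s : ℝ) * (√L * P n) ≤ s * (4 * γ * √L) := by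
      calc (s * s : ℝ) * (√L * P n) = s * √L * (s * P n) := by ring
        _ ≤ s * √L * (4 * γ) := by gcongr
        _ = s * (4 * γ * √L) := by ring
    calc (q : ℝ) * ((n.choose s : ℝ) * n.choose s)
          * Real.exp ((s * s : ℝ) * (√L * P n) - δ * s * L / Real.log L * Real.log √L)
        ≤ q * (Real.exp (s * (1 + Real.log (L / γ))) * Real.exp (s * (1 + Real.log (L / γ))))
          * Real.exp (s * (4 * γ * √L) - s * (δ * L / 2)) := by
          rw [hx]; gcongr
      _ = q * Real.exp (s * E n) := by
          rw [mul_assoc, ← Real.exp_add, ← Real.exp_add]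
          congr 2
          simp only [hE]; ring
      _ ≤ q * Real.exp (E n) := by
          have h6b : E n ≤ 0 := h6
          gcongr
          nlinarith
  have hreal : Tendsto (fun n => (graphM n q α (P n)).real (B n)) atTop (nhds 0) :=
    squeeze_zero' (Eventually.of_forall fun n => measureReal_nonneg) (key.mono fun n h => h.2) hlim
  have hfin : Tendsto (fun n => ENNReal.ofReal (1 - (graphM n q α (P n)).real (B n))) atTop
      (nhds 1) := by
    have := ENNReal.tendsto_ofReal (hreal.const_sub 1)
    simpa using this
  refine hfin.congr' ?_
  filter_upwards [key] with n hn
  have := colorM_prob q α hα hsum (P n) hn.1.1 hn.1.2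
  have hpr : IsProbabilityMeasure (graphM n q α (P n)) := by unfold graphM; infer_instance
  have hcompl : (graphM n q α (P n)).real (B n)ᶜ = 1 - (graphM n q α (P n)).real (B n) :=
    probReal_compl_eq_one_sub MeasurableSet.of_discrete
  rw [← hcompl, ofReal_measureReal]
  rfl
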